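/- There is an absolute constant c' > 0 such that the following holds. Let T = (V,E) be a finite tree with n ≥ 2 vertices and maximal degree at most M. Then for every vertex v ∈ V, the expected cover time of the simple random walk started at v satisfies E_v C ≥ c' · n · (log n)² / log(M+2). -/

import Mathlib

open Finset
open scoped ENNReal

/-- Transition probability of the simple random walk on `G`:
from `x`, move to a uniformly chosen neighbor of `x`. -/
noncomputable def stepProb {V : Type*} [Fintype V] (G : SimpleGraph V)
    [DecidableRel G.Adj] (x y : V) : ℝ :=
  if G.Adj x y then ((G.degree x : ℝ))⁻¹ else 0

/-- Probability that the walk follows the finite trajectory `f` (given it starts at `f 0`). -/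
noncomputable def pathProb {V : Type*} [Fintype V] (G : SimpleGraph V)
    [DecidableRel G.Adj] {k : ℕ} (f : Fin (k + 1) → V) : ℝ :=
  ∏ i : Fin k, stepProb G (f i.castSucc) (f i.succ)

/-- `P_u(T_w > k)`: the probability that the walk started at `u` has not visited `w`
by time `k`.  (This is a cylinder event, so it is a finite sum over trajectories.) -/
noncomputable def hitSurvival {V : Type*} [Fintype V] [DecidableEq V] (G : SimpleGraph V)
    [DecidableRel G.Adj] (u w : V) (k : ℕ) : ℝ :=
  ∑ f : Fin (k + 1) → V, if f 0 = u ∧ ∀ i, f i ≠ w then pathProb G f else 0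

/-- `H(u,w) = E_u T_w`, the expected hitting time of `w` for the simple random walk
started at `u`, via `E[T] = ∑_{k≥0} P(T > k)`. -/
noncomputable def expHit {V : Type*} [Fintype V] [DecidableEq V] (G : SimpleGraph V)
    [DecidableRel G.Adj] (u w : V) : ℝ≥0∞ :=
  ∑' k : ℕ, ENNReal.ofReal (hitSurvival G u w k)

/-- `P_v(C > k)`: the probability that the walk started at `v` has not visited every
vertex by time `k`, i.e. `max_w T_w > k`. -/
noncomputable def coverSurvival {V : Type*} [Fintype V] [DecidableEq V] (G : SimpleGraph V)
    [DecidableRel G.Adj] (v : V) (k : ℕ) : ℝ :=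
  ∑ f : Fin (k + 1) → V, if f 0 = v ∧ ∃ w, ∀ i, f i ≠ w then pathProb G f else 0

/-- `E_v C`, the expected cover time of the simple random walk started at `v`,
via `E[C] = ∑_{k≥0} P(C > k)`. -/
noncomputable def expCover {V : Type*} [Fintype V] [DecidableEq V] (G : SimpleGraph V)
    [DecidableRel G.Adj] (v : V) : ℝ≥0∞ :=
  ∑' k : ℕ, ENNReal.ofReal (coverSurvival G v k)

/-- `(z, rad)` is a circle packing for `G`: a family of closed round disks
(`C_v` has center `z v` and radius `rad v > 0`) with pairwise disjoint interiors,
such that for `u ≠ v`, `C_u ∩ C_v ≠ ∅` iff `{u,v}` is an edge of `G`. -/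
def IsCirclePacking {V : Type*} (G : SimpleGraph V)
    (z : V → EuclideanSpace ℝ (Fin 2)) (rad : V → ℝ) : Prop :=
  (∀ v, 0 < rad v) ∧
  (∀ u v : V, u ≠ v →
    interior (Metric.closedBall (z u) (rad u)) ∩
      interior (Metric.closedBall (z v) (rad v)) = ∅) ∧
  (∀ u v : V, u ≠ v →
    ((Metric.closedBall (z u) (rad u) ∩ Metric.closedBall (z v) (rad v)).Nonempty ↔ G.Adj u v))

/-- `G` admits a circle packing (equivalently, by Koebe's theorem, `G` is planar). -/
def HasCirclePacking {V : Type*} (G : SimpleGraph V) : Prop :=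
  ∃ z rad, IsCirclePacking G z rad


set_option linter.unusedSectionVars false

section helper
variable {V : Type} [Fintype V] [DecidableEq V] (G : SimpleGraph V) [DecidableRel G.Adj]

/-- `qs k S v` is the probability that the walk from `v` has not covered `S` by time `k`. -/
noncomputable def qs : ℕ → Finset V → V → ℝ
  | 0, S, v => if S.erase v = ∅ then 0 else 1
  | k + 1, S, v => ∑ u, stepProb G v u * qs k (S.erase v) u

/-- Expected value of the covering time of `S` truncated at `k`. -/
noncomputable def fs (k : ℕ) (S : Finset V) (v : V) : ℝ := ∑ j ∈ range k, qs G j S v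

/-- Probability that by time `k` all of `S` but `z` is covered, and `z` is last. -/
noncomputable def ls : ℕ → Finset V → V → V → ℝ
  | 0, _, _, _ => 0
  | k + 1, S, v, z => if v = z then 0 else if S.erase z ⊆ {v} then 1 else
      ∑ u, stepProb G v u * ls k (S.erase v) u z

lemma stepProb_nonneg' (x y : V) : 0 ≤ stepProb G x y := by
  unfold stepProb; split_ifs <;> positivity

lemma stepProb_sum (hd : ∀ x, 0 < G.degree x) (x : V) : ∑ y, stepProb G x y = 1 := by
  unfold stepProb
  rw [← Finset.sum_filter, Finset.sum_const, nsmul_eq_mul]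
  have : (Finset.univ.filter fun y => G.Adj x y) = G.neighborFinset x := by ext; simp
  rw [this, G.card_neighborFinset_eq_degree]
  have := hd x
  field_simp

lemma qs_nonneg (k : ℕ) (S : Finset V) (v : V) : 0 ≤ qs G k S v := by
  induction k generalizing S v with
  | zero => unfold qs; split_ifs <;> norm_num
  | succ k ih => unfold qs; exact sum_nonneg fun u _ => mul_nonneg (stepProb_nonneg' G _ _) (ih _ _)

lemma qs_mono (k : ℕ) {S T : Finset V} (h : S ⊆ T) (v : V) : qs G k S v ≤ qs G k T v := by
  induction k generalizing S T v with
  | zero =>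
    unfold qs
    by_cases hT : T.erase v = ∅
    · have : S.erase v = ∅ := by
        rw [← Finset.subset_empty, ← hT]; exact erase_subset_erase v h
      simp [hT, this]
    · rw [if_neg hT]; split_ifs <;> norm_num
  | succ k ih =>
    unfold qs
    exact sum_le_sum fun u _ => mul_le_mul_of_nonneg_left (ih (erase_subset_erase v h) u)
      (stepProb_nonneg' G _ _)

lemma qs_erase (k : ℕ) (S : Finset V) (v : V) : qs G k (S.erase v) v = qs G k S v := by
  cases k <;> simp [qs]

lemma qs_empty (k : ℕ) (v : V) : qs G k ∅ v = 0 := by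
  induction k generalizing v with
  | zero => simp [qs]
  | succ k ih => simp [qs, ih]

lemma fs_succ (k : ℕ) (S : Finset V) (v : V) :
    fs G (k + 1) S v = (if S.erase v = ∅ then 0 else 1) +
      ∑ u, stepProb G v u * fs G k (S.erase v) u := by
  unfold fs
  rw [sum_range_succ']
  rw [add_comm]
  congr 1
  simp only [qs, mul_sum]
  rw [sum_comm]

lemma fs_mono (k : ℕ) {S T : Finset V} (h : S ⊆ T) (v : V) : fs G k S v ≤ fs G k T v :=
  sum_le_sum fun _ _ => qs_mono G _ h v

lemma fs_mono_left {k m : ℕ} (h : k ≤ m) (S : Finset V) (v : V) : fs G k S v ≤ fs G m S v :=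
  sum_le_sum_of_subset_of_nonneg (range_mono h) fun _ _ _ => qs_nonneg G _ _ _

lemma fs_erase (k : ℕ) (S : Finset V) (v : V) : fs G k (S.erase v) v = fs G k S v :=
  sum_congr rfl fun _ _ => qs_erase G _ _ _

lemma fs_empty (k : ℕ) (v : V) : fs G k ∅ v = 0 := by simp [fs, qs_empty]

lemma ls_nonneg (k : ℕ) (S : Finset V) (v z : V) : 0 ≤ ls G k S v z := by
  induction k generalizing S v with
  | zero => simp [ls]
  | succ k ih =>
    unfold ls; split_ifs
    · exact le_rfl
    · norm_num
    · exact sum_nonneg fun u _ => mul_nonneg (stepProb_nonneg' G _ _) (ih _ _)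

lemma ls_sum (hd : ∀ x, 0 < G.degree x) (k : ℕ) (S : Finset V) (hS : 2 ≤ #S) (v : V) :
    1 - qs G k S v ≤ ∑ z ∈ S, ls G k S v z := by
  induction k generalizing S v with
  | zero =>
    have : S.erase v ≠ ∅ := by
      intro h
      have := Finset.pred_card_le_card_erase (s := S) (a := v)
      rw [h] at this; simp at this; omega
    simp [qs, ls, this]
  | succ k ih =>
    have hle := Finset.pred_card_le_card_erase (s := S) (a := v)
    by_cases h2 : 2 ≤ #(S.erase v)
    · have key : ∀ z ∈ S.erase v, ls G (k + 1) S v z = ∑ u, stepProb G v u * ls G k (S.erase v) u z := by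
        intro z hz
        have hzv : v ≠ z := (ne_of_mem_erase hz).symm
        have hns : ¬ S.erase z ⊆ {v} := by
          intro h
          have : S.erase v ⊆ {z} := by
            intro x hx
            by_contra hxz
            have : x ∈ ({v} : Finset V) := h (by simp at *; tauto)
            simp at this hx; tauto
          have := card_le_card this
          simp at this; omega
        simp [ls, hzv, hns]
      calc 1 - qs G (k + 1) S v = ∑ u, stepProb G v u * (1 - qs G k (S.erase v) u) := by
            simp [mul_sub, qs, stepProb_sum G hd]
        _ ≤ ∑ u, stepProb G v u * ∑ z ∈ S.erase v, ls G k (S.erase v) u z :=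
            sum_le_sum fun u _ => mul_le_mul_of_nonneg_left (ih _ h2 u) (stepProb_nonneg' G _ _)
        _ = ∑ z ∈ S.erase v, ls G (k + 1) S v z := by
            rw [sum_congr rfl key, sum_comm]; simp [mul_sum]
        _ ≤ _ := sum_le_sum_of_subset_of_nonneg (erase_subset _ _) fun _ _ _ => ls_nonneg G _ _ _ _
    · have h1 : #(S.erase v) = 1 := by omega
      obtain ⟨z, hz⟩ := card_eq_one.1 h1
      have hzS : z ∈ S.erase v := by simp [hz]
      have : ls G (k + 1) S v z = 1 := by
        have hzv : v ≠ z := (ne_of_mem_erase hzS).symm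
        have hs : S.erase z ⊆ {v} := by
          intro x hx
          by_contra hxv
          have : x ∈ S.erase v := by simp at *; tauto
          rw [hz] at this; simp at this hx; tauto
        simp [ls, hzv, hs]
      have h3 := single_le_sum (f := fun z => ls G (k + 1) S v z) (fun z _ => ls_nonneg G (k+1) S v z)
        (mem_of_mem_erase hzS)
      have := qs_nonneg G (k + 1) S v
      linarith

lemma strong_markov (A : Finset V) (B : ℝ) (m : ℕ)
    (hB : ∀ y ∈ A, ∀ z ∈ A, y ≠ z → B ≤ fs G m {z} y) (k N : ℕ) (hN : k + m ≤ N) (S : Finset V)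
    (hSA : S ⊆ A) (hS : 2 ≤ #S) (v z : V) (hz : z ∈ S) :
    ls G k S v z * B ≤ fs G N S v - fs G N (S.erase z) v := by
  induction k generalizing N S v with
  | zero => simpa [ls] using fs_mono G N (erase_subset z S) v
  | succ k ih =>
    have hmono := fs_mono G N (erase_subset z S) v
    unfold ls
    split_ifs with h1 h2
    · simpa using hmono
    · have hv : S.erase z = {v} := by
        have := Finset.pred_card_le_card_erase (s := S) (a := z)
        apply eq_of_subset_of_card_le h2; rw [card_singleton]; omega
      have hvS : v ∈ S := mem_of_mem_erase (a := z) (by simp [hv])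
      have hS2 : S.erase v = {z} := by
        ext x
        have := congrArg (x ∈ ·) hv
        simp at this ⊢
        by_cases hx : x = z
        · subst hx; tauto
        · simp [hx] at this; simp [hx]; tauto
      have e1 : fs G N S v = fs G N {z} v := by rw [← fs_erase, hS2]
      have e2 : fs G N (S.erase z) v = 0 := by rw [hv, ← fs_erase]; simp [fs_empty]
      rw [e1, e2, one_mul, sub_zero]
      exact (hB v (hSA hvS) z (hSA hz) h1).trans (fs_mono_left G (by omega) _ _)
    · obtain ⟨N, rfl⟩ : ∃ N', N = N' + 1 := ⟨N - 1, by omega⟩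
      have hzv : z ∈ S.erase v := by simp [hz, Ne.symm h1]
      have hc : 2 ≤ #(S.erase v) := by
        obtain ⟨x, hx, hxv⟩ := not_subset.1 h2
        have : ({x, z} : Finset V) ⊆ S.erase v := by
          intro y hy; simp at *; rcases hy with rfl | rfl <;> tauto
        have h3 := card_le_card this
        rwa [card_pair (ne_of_mem_erase hx)] at h3
      rw [fs_succ, fs_succ, sum_mul]
      have hne : S.erase v ≠ ∅ := by intro h; simp [h] at hzv
      rw [if_neg hne, erase_right_comm (a := z) (b := v)]
      have : ∑ u, stepProb G v u * ls G k (S.erase v) u z * B ≤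
          ∑ u, stepProb G v u * fs G N (S.erase v) u - ∑ u, stepProb G v u * fs G N ((S.erase v).erase z) u := by
        rw [← sum_sub_distrib]
        refine sum_le_sum fun u _ => ?_
        rw [← mul_sub, mul_assoc]
        exact mul_le_mul_of_nonneg_left (ih N (by omega) _ ((erase_subset _ _).trans hSA) hc u hzv) (stepProb_nonneg' G _ _)
      split_ifs <;> linarith

lemma qs_le_of_bdd (E : ℝ) (S : Finset V) (v : V) (hE : ∀ k, fs G k S v ≤ E) :
    Filter.Tendsto (fun k => qs G k S v) Filter.atTop (nhds 0) :=
  (summable_of_sum_range_le (fun k => qs_nonneg G k S v) hE).tendsto_atTop_zero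

/-- Matthews lower bound. -/
lemma matthews (hd : ∀ x, 0 < G.degree x) (A : Finset V) (B : ℝ) (m : ℕ)
    (hB : ∀ y ∈ A, ∀ z ∈ A, y ≠ z → B ≤ fs G m {z} y) (v : V) (E : ℝ)
    (hE : ∀ k, fs G k Finset.univ v ≤ E) :
    ∀ (s : ℕ) (S : Finset V), S ⊆ A → #S = s + 1 →
      B * ((harmonic (s + 1) : ℚ) - 1 : ℝ) ≤ ⨆ k, fs G k S v := by
  have hbd : ∀ S k, fs G k S v ≤ E := fun S k => (fs_mono G k (subset_univ S) v).trans (hE k)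
  have hbdd : ∀ S, BddAbove (Set.range fun k => fs G k S v) := fun S =>
    ⟨E, by rintro _ ⟨k, rfl⟩; exact hbd S k⟩
  have htend : ∀ S, Filter.Tendsto (fun k => fs G k S v) Filter.atTop (nhds (⨆ k, fs G k S v)) :=
    fun S => tendsto_atTop_ciSup (fun _ _ h => fs_mono_left G h S v) (hbdd S)
  intro s
  induction s with
  | zero =>
    intro S _ _
    simp
    exact (by simp [fs] : (0:ℝ) ≤ fs G 0 S v).trans (le_ciSup (hbdd S) 0)
  | succ s ih =>
    intro S hSA hS
    have h2 : 2 ≤ #S := by omega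
    -- limit inequality
    by_cases hB0 : B ≤ 0
    · have h0 : (0:ℝ) ≤ ⨆ k, fs G k S v :=
        (by simp [fs] : (0:ℝ) ≤ fs G 0 S v).trans (le_ciSup (hbdd S) 0)
      refine le_trans ?_ h0
      apply mul_nonpos_of_nonpos_of_nonneg hB0
      have : (1:ℚ) ≤ harmonic (s + 1 + 1) := by
        unfold harmonic
        rw [sum_range_succ']
        simp
        positivity
      have : (1:ℝ) ≤ (harmonic (s + 1 + 1) : ℚ) := by exact_mod_cast this
      linarith
    · have hB1 : 0 < B := not_le.1 hB0
      have hineq : ∀ k, (1 - qs G k S v) * B ≤ ∑ z ∈ S, (fs G (k + m) S v - fs G (k + m) (S.erase z) v) := by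
        intro k
        calc _ ≤ (∑ z ∈ S, ls G k S v z) * B := mul_le_mul_of_nonneg_right (ls_sum G hd k S h2 v) hB1.le
          _ = ∑ z ∈ S, ls G k S v z * B := by rw [sum_mul]
          _ ≤ _ := sum_le_sum fun z hz => strong_markov G A B m hB k (k + m) le_rfl S hSA h2 v z hz
      have hshift : ∀ T, Filter.Tendsto (fun k => fs G (k + m) T v) Filter.atTop (nhds (⨆ k, fs G k T v)) :=
        fun T => (htend T).comp (Filter.tendsto_add_atTop_nat m)
      have hl : Filter.Tendsto (fun k => (1 - qs G k S v) * B) Filter.atTop (nhds ((1 - 0) * B)) :=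
        ((qs_le_of_bdd G E S v (hbd S)).const_sub 1).mul_const B
      have hr : Filter.Tendsto (fun k => ∑ z ∈ S, (fs G (k + m) S v - fs G (k + m) (S.erase z) v)) Filter.atTop
          (nhds (∑ z ∈ S, ((⨆ k, fs G k S v) - ⨆ k, fs G k (S.erase z) v))) :=
        tendsto_finsetSum _ fun z _ => (hshift S).sub (hshift (S.erase z))
      have hfin := le_of_tendsto_of_tendsto' hl hr hineq
      have hub : ∑ z ∈ S, ((⨆ k, fs G k S v) - ⨆ k, fs G k (S.erase z) v) ≤
          ∑ z ∈ S, ((⨆ k, fs G k S v) - B * ((harmonic (s + 1) : ℚ) - 1 : ℝ)) := by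
        refine sum_le_sum fun z hz => sub_le_sub_left (ih _ ((erase_subset _ _).trans hSA) ?_) _
        rw [card_erase_of_mem hz]; omega
      rw [sum_const, hS, nsmul_eq_mul] at hub
      rw [harmonic_succ]
      push_cast at *
      have hs : (0:ℝ) < (s:ℝ) + 1 + 1 := by positivity
      have : B / ((s:ℝ)+1+1) ≤ (⨆ k, fs G k S v) - B * ((harmonic (s + 1) : ℚ) - 1 : ℝ) := by
        rw [div_le_iff₀ hs]; linarith
      rw [div_eq_mul_inv] at this
      linarith

lemma hit_lower (w : V) (g : V → ℝ) (hw : g w ≤ 0)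
    (hg : ∀ x, x ≠ w → g x ≤ 1 + ∑ u, stepProb G x u * g u) (x : V) (hx : 0 < g x) :
    ∃ k, g x / 2 ≤ fs G k {w} x := by
  obtain ⟨C, hC⟩ : ∃ C : ℝ, ∀ x, g x ≤ C := by
    obtain ⟨C, hC⟩ := (Set.finite_range g).bddAbove
    exact ⟨C, fun x => hC ⟨x, rfl⟩⟩
  have key : ∀ k x, g x ≤ fs G k {w} x + C * qs G k {w} x := by
    intro k
    induction k with
    | zero =>
      intro x
      by_cases h : x = w
      · subst h; simpa [fs, qs] using hw
      · have : ({w} : Finset V).erase x ≠ ∅ := by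
          rw [erase_eq_of_notMem (by simpa using h)]; simp
        simpa [fs, qs, this] using hC x
    | succ k ih =>
      intro x
      by_cases h : x = w
      · subst h
        rw [← fs_erase, ← qs_erase]; simpa [fs_empty, qs_empty] using hw
      · have he : ({w} : Finset V).erase x = {w} := erase_eq_of_notMem (by simpa using h)
        rw [fs_succ, qs, he, if_neg (by simp), mul_sum, add_assoc, ← sum_add_distrib]
        refine (hg x h).trans (add_le_add le_rfl (sum_le_sum fun u _ => ?_))
        have := mul_le_mul_of_nonneg_left (ih u) (stepProb_nonneg' G x u)
        linarith
  by_contra! hcon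
  have ht := (qs_le_of_bdd G (g x / 2) {w} x fun k => (hcon k).le).const_mul C
  have h1 : ∀ k, g x / 2 ≤ C * qs G k {w} x := fun k => by have := key k x; have := hcon k; linarith
  have := ge_of_tendsto' ht h1
  simp at this; linarith

lemma cover_eq (k : ℕ) (S : Finset V) (v : V) :
    (∑ f : Fin (k + 1) → V, if f 0 = v ∧ ∃ w ∈ S, ∀ i, f i ≠ w then pathProb G f else 0) = qs G k S v := by
  induction k generalizing S v with
  | zero =>
    rw [← (Equiv.funUnique (Fin 1) V).symm.sum_comp]
    have : ∀ x : V, (if ((Equiv.funUnique (Fin 1) V).symm x 0 = v ∧ ∃ w ∈ S, ∀ i, (Equiv.funUnique (Fin 1) V).symm x i ≠ w) then pathProb G ((Equiv.funUnique (Fin 1) V).symm x) else 0)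
      = if x = v then (if S.erase v = ∅ then 0 else 1) else 0 := by
      intro x
      by_cases h : x = v
      · subst h
        by_cases h2 : S.erase x = ∅
        · have : ¬ ∃ w ∈ S, ∀ i, (Equiv.funUnique (Fin 1) V).symm x i ≠ w := by
            rintro ⟨w, hw, hi⟩
            have : w ∈ S.erase x := by simp [hw]; exact (hi 0).symm
            simp [h2] at this
          rw [if_neg (fun h => this h.2)]; simp [h2]
        · obtain ⟨w, hw⟩ := nonempty_iff_ne_empty.2 h2
          rw [if_pos ⟨rfl, w, mem_of_mem_erase hw, fun i => (ne_of_mem_erase hw).symm⟩]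
          simp [pathProb, h2]
      · rw [if_neg (by intro h'; exact h h'.1)]; simp [h]
    simp_rw [this]
    simp [qs]
  | succ k ih =>
    rw [← (Fin.consEquiv (fun _ : Fin (k+2) => V)).sum_comp, Fintype.sum_prod_type]
    rw [Finset.sum_eq_single v]
    · unfold qs
      simp_rw [← ih, mul_sum]
      rw [sum_comm]
      refine sum_congr rfl fun f _ => ?_
      rw [Finset.sum_eq_single (f 0)]
      · have hiff : (∃ w ∈ S, ∀ i, (Fin.cons v f : Fin (k+2) → V) i ≠ w) ↔ ∃ w ∈ S.erase v, ∀ i, f i ≠ w := by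
          simp only [Fin.forall_fin_succ (n := k+1), Fin.cons_zero, Fin.cons_succ, mem_erase]
          constructor
          · rintro ⟨w, h1, h2, h3⟩; exact ⟨w, ⟨h2.symm, h1⟩, h3⟩
          · rintro ⟨w, ⟨h2, h1⟩, h3⟩; exact ⟨w, h1, h2.symm, h3⟩
        have hp : pathProb G (Fin.cons v f : Fin (k+2) → V) = stepProb G v (f 0) * pathProb G f := by
          unfold pathProb
          rw [Fin.prod_univ_succ]
          simp
        simp only [Fin.consEquiv, Equiv.coe_fn_mk, Fin.cons_zero, true_and, hp]
        by_cases h : ∃ w ∈ S.erase v, ∀ i, f i ≠ w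
        · rw [if_pos (hiff.2 h), if_pos h]
        · rw [if_neg (fun h' => h (hiff.1 h')), if_neg h, mul_zero]
      · intro b _ hb; simp [hb.symm]
      · simp
    · intro b _ hb
      refine sum_eq_zero fun f _ => ?_
      simp [Fin.consEquiv, hb]
    · simp

lemma expCover_bdd (v : V) (h : expCover G v ≠ ⊤) (k : ℕ) :
    fs G k Finset.univ v ≤ (expCover G v).toReal := by
  have : ENNReal.ofReal (fs G k Finset.univ v) ≤ expCover G v := by
    unfold fs expCover
    rw [ENNReal.ofReal_sum_of_nonneg fun _ _ => qs_nonneg G _ _ _]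
    refine le_trans (le_of_eq (sum_congr rfl fun j _ => ?_)) (ENNReal.sum_le_tsum (range k))
    rw [← cover_eq]; unfold coverSurvival; simp
  exact (ENNReal.ofReal_le_iff_le_toReal h).1 this
end helper

section tree
variable {V : Type} [Fintype V] [DecidableEq V] (G : SimpleGraph V) [DecidableRel G.Adj]

lemma tree_unique (hT : G.IsTree) {x y₁ y₂ z : V} (h1 : G.Adj x y₁) (h2 : G.Adj x y₂)
    (e1 : G.dist y₁ z + 1 = G.dist x z) (e2 : G.dist y₂ z + 1 = G.dist x z) : y₁ = y₂ := by
  obtain ⟨p1, hp1⟩ := hT.connected.exists_walk_length_eq_dist y₁ z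
  obtain ⟨p2, hp2⟩ := hT.connected.exists_walk_length_eq_dist y₂ z
  have q1 : (SimpleGraph.Walk.cons h1 p1).IsPath :=
    SimpleGraph.Walk.isPath_of_length_eq_dist _ (by simp [hp1, e1])
  have q2 : (SimpleGraph.Walk.cons h2 p2).IsPath :=
    SimpleGraph.Walk.isPath_of_length_eq_dist _ (by simp [hp2, e2])
  have := (hT.isAcyclic.subsingleton_path x z).elim ⟨_, q1⟩ ⟨_, q2⟩
  have := congrArg Subtype.val this
  simp at this
  exact this.1

lemma tree_exists (hT : G.IsTree) {x z : V} (h : x ≠ z) :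
    ∃ y, G.Adj x y ∧ G.dist y z + 1 = G.dist x z := by
  obtain ⟨p, hp⟩ := hT.connected.exists_walk_length_eq_dist x z
  cases p with
  | nil => exact absurd rfl h
  | cons hadj p =>
    rename_i y
    refine ⟨y, hadj, ?_⟩
    have h1 := SimpleGraph.dist_le p
    simp at hp
    have h2 := hT.dist_eq_dist_add_one_of_adj z hadj
    rw [SimpleGraph.dist_comm (v := x), SimpleGraph.dist_comm (v := y)] at h2
    omega

lemma tree_adj (hT : G.IsTree) (z : V) {x y : V} (h : G.Adj x y) :
    G.dist y z + 1 = G.dist x z ∨ G.dist y z = G.dist x z + 1 := by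
  have h2 := hT.dist_eq_dist_add_one_of_adj z h
  rw [SimpleGraph.dist_comm (v := x), SimpleGraph.dist_comm (v := y)] at h2
  omega

lemma lap_dist (hT : G.IsTree) (x z : V) :
    ∑ y ∈ G.neighborFinset x, ((G.dist y z : ℝ) - G.dist x z) =
      G.degree x - (if x = z then 0 else 2) := by
  split_ifs with h
  · subst h
    rw [sum_congr rfl (g := fun _ => (1:ℝ))]
    · simp
    · intro y hy
      have : G.dist y x = 1 := SimpleGraph.dist_eq_one_iff_adj.2 (by simpa using hy : G.Adj x y).symm
      simp [this]
  · obtain ⟨y0, ha, he⟩ := tree_exists G hT h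
    have : ∀ y ∈ G.neighborFinset x, ((G.dist y z : ℝ) - G.dist x z) = 1 - if y = y0 then 2 else 0 := by
      intro y hy
      have hy' : G.Adj x y := by simpa using hy
      split_ifs with hyy
      · subst hyy
        rw [← he]; push_cast; ring
      · rcases tree_adj G hT z hy' with h' | h'
        · exact absurd (tree_unique G hT hy' ha h' he) hyy
        · rw [h']; push_cast; ring
    rw [sum_congr rfl this, sum_sub_distrib]
    simp [ha]

lemma branch (hT : G.IsTree) (z v : V) (k : ℕ) : ∀ (ρ c : V), G.Adj ρ c → G.dist c z = G.dist ρ z + 1 →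
    G.dist c v + 1 = G.dist ρ v → G.dist c v = k → G.dist v z = G.dist ρ v + G.dist ρ z := by
  induction k with
  | zero =>
    intro ρ c ha h1 h2 h3
    have : c = v := hT.connected.dist_eq_zero_iff.1 h3
    subst this
    omega
  | succ k ih =>
    intro ρ c ha h1 h2 h3
    have hcv : c ≠ v := by rintro rfl; simp at h3
    obtain ⟨c', ha', he'⟩ := tree_exists G hT hcv
    have hne : c' ≠ ρ := by rintro rfl; omega
    have h4 : G.dist c' z = G.dist c z + 1 := by
      rcases tree_adj G hT z ha' with h | h
      · exact absurd (tree_unique G hT ha' ha.symm h (by omega)) hne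
      · exact h
    have := ih c c' ha' h4 he' (by omega)
    omega

/-- total distance -/
noncomputable def Sd (x : V) : ℕ := ∑ z, G.dist x z

lemma Sd_lip (hT : G.IsTree) (x ρ : V) : Sd G x ≤ Sd G ρ + (Fintype.card V - 1) * G.dist ρ x := by
  unfold Sd
  rw [← Finset.add_sum_erase _ _ (mem_univ x), SimpleGraph.dist_self, zero_add]
  rw [← Finset.add_sum_erase _ (fun z => G.dist ρ z) (mem_univ x)]
  have : ∑ z ∈ univ.erase x, G.dist x z ≤ ∑ z ∈ univ.erase x, (G.dist ρ z + G.dist ρ x) := by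
    refine sum_le_sum fun z _ => ?_
    have := hT.connected.dist_triangle (u := x) (v := ρ) (w := z)
    rw [SimpleGraph.dist_comm (u := x) (v := ρ)] at this
    omega
  rw [sum_add_distrib, sum_const, card_erase_of_mem (mem_univ x), card_univ, smul_eq_mul] at this
  omega

/-- expected hitting time on a tree -/
noncomputable def hh (w x : V) : ℝ := ((Fintype.card V : ℝ) - 1) * G.dist x w + Sd G w - Sd G x

lemma tree_deg (hT : G.IsTree) (hn : 2 ≤ Fintype.card V) (x : V) : 0 < G.degree x := by
  have : Nontrivial V := Fintype.one_lt_card_iff_nontrivial.1 (by omega)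
  exact hT.connected.preconnected.degree_pos_of_nontrivial x

lemma hh_harm (hT : G.IsTree) (hn : 2 ≤ Fintype.card V) (w x : V) (hx : x ≠ w) :
    hh G w x ≤ 1 + ∑ u, stepProb G x u * hh G w u := by
  have hd := tree_deg G hT hn
  have e1 : ∑ u, stepProb G x u * hh G w u - hh G w x = ∑ u, stepProb G x u * (hh G w u - hh G w x) := by
    simp_rw [mul_sub, sum_sub_distrib, ← sum_mul, stepProb_sum G hd]; ring
  have e2 : ∑ u, stepProb G x u * (hh G w u - hh G w x) =
      (G.degree x : ℝ)⁻¹ * ∑ u ∈ G.neighborFinset x, (hh G w u - hh G w x) := by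
    have : G.neighborFinset x = univ.filter fun y => G.Adj x y := by ext; simp
    rw [this, sum_filter, mul_sum]
    refine sum_congr rfl fun u _ => ?_
    unfold stepProb; split_ifs <;> simp
  have e3 : ∑ u ∈ G.neighborFinset x, (hh G w u - hh G w x) = - G.degree x := by
    have : ∀ u, hh G w u - hh G w x = ((Fintype.card V : ℝ) - 1) * ((G.dist u w : ℝ) - G.dist x w)
        - ∑ z, ((G.dist u z : ℝ) - G.dist x z) := by
      intro u
      unfold hh Sd; push_cast; rw [sum_sub_distrib]; ring
    simp_rw [this, sum_sub_distrib (s := G.neighborFinset x), ← mul_sum]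
    rw [lap_dist G hT, if_neg hx, sum_comm]
    simp_rw [lap_dist G hT]
    rw [sum_sub_distrib]
    have : ∑ z, (if x = z then (0:ℝ) else 2) = 2 * ((Fintype.card V : ℝ) - 1) := by
      have : ∀ z, (if x = z then (0:ℝ) else 2) = 2 - if x = z then 2 else 0 := by
        intro z; split_ifs <;> norm_num
      simp_rw [this, sum_sub_distrib]; simp; ring
    rw [this]; simp; ring
  have h0 : (0:ℝ) < G.degree x := by exact_mod_cast hd x
  rw [e2, e3] at e1
  have : (G.degree x : ℝ)⁻¹ * -(G.degree x : ℝ) = -1 := by field_simp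
  linarith

lemma hit_tree (hT : G.IsTree) (hn : 2 ≤ Fintype.card V) (w x : V) (B : ℝ) (hB0 : 0 < B) (hB : B ≤ hh G w x) :
    ∃ k, B / 2 ≤ fs G k {w} x := by
  obtain ⟨k, hk⟩ := hit_lower G w (hh G w) (by simp [hh]) (hh_harm G hT hn w) x (by linarith)
  exact ⟨k, by linarith⟩

lemma ball_card (hT : G.IsTree) (M : ℕ) (hM : ∀ v : V, G.degree v ≤ M) (x : V) (k : ℕ) :
    #(univ.filter fun y => G.dist x y ≤ k) ≤ (M + 1) ^ k := by
  induction k with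
  | zero =>
    have : (univ.filter fun y => G.dist x y ≤ 0) = {x} := by
      ext y; simp [hT.connected.dist_eq_zero_iff, eq_comm]
    rw [this]; simp
  | succ k ih =>
    have : (univ.filter fun y => G.dist x y ≤ k + 1) ⊆
        (univ.filter fun y => G.dist x y ≤ k).biUnion fun y => insert y (G.neighborFinset y) := by
      intro y hy
      simp only [mem_filter, mem_univ, true_and] at hy
      rw [mem_biUnion]
      by_cases h : G.dist x y ≤ k
      · exact ⟨y, by simpa using h, by simp⟩
      · have hne : y ≠ x := by rintro rfl; simp at h
        obtain ⟨c, ha, he⟩ := tree_exists G hT hne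
        rw [SimpleGraph.dist_comm, SimpleGraph.dist_comm (u := y)] at he
        refine ⟨c, ?_, ?_⟩
        · simp; omega
        · simp [ha.symm]
    refine (card_le_card this).trans (card_biUnion_le.trans ?_)
    calc _ ≤ ∑ _y ∈ univ.filter (fun y => G.dist x y ≤ k), (M + 1) := by
          refine sum_le_sum fun y _ => (card_insert_le _ _).trans ?_
          have := hM y
          rw [SimpleGraph.card_neighborFinset_eq_degree]; omega
      _ ≤ _ := by rw [sum_const, smul_eq_mul, pow_succ]; exact Nat.mul_le_mul_right _ ih

lemma separated (hT : G.IsTree) (M : ℕ) (hM : ∀ v : V, G.degree v ≤ M) (k : ℕ) (U : Finset V) :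
    ∃ A ⊆ U, (∀ x ∈ A, ∀ y ∈ A, x ≠ y → k + 1 ≤ G.dist x y) ∧ #U ≤ #A * (M + 1) ^ k := by
  classical
  let F := U.powerset.filter fun A => ∀ x ∈ A, ∀ y ∈ A, x ≠ y → k + 1 ≤ G.dist x y
  obtain ⟨A, hA, hmax⟩ := F.exists_max_image card ⟨∅, by simp [F]⟩
  simp only [F, mem_filter, mem_powerset] at hA hmax
  refine ⟨A, hA.1, hA.2, ?_⟩
  have hcov : U ⊆ A.biUnion fun a => univ.filter fun y => G.dist a y ≤ k := by
    intro u hu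
    by_contra hcon
    simp only [mem_biUnion, mem_filter, mem_univ, true_and, not_exists, not_and, not_le] at hcon
    have huA : u ∉ A := fun h => by have := hcon u h; simp at this
    have := hmax (insert u A) ⟨insert_subset hu hA.1, by
      intro x hx y hy hxy
      rw [mem_insert] at hx hy
      rcases hx with rfl | hx <;> rcases hy with rfl | hy
      · exact absurd rfl hxy
      · rw [SimpleGraph.dist_comm]; exact hcon y hy
      · exact hcon x hx
      · exact hA.2 x hx y hy hxy⟩
    rw [card_insert_of_notMem huA] at this; omega
  refine (card_le_card hcov).trans (card_biUnion_le.trans ?_)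
  refine (sum_le_sum fun a _ => ball_card G hT M hM a k).trans ?_
  simp

/-- the two cases -/
lemma centroid (hT : G.IsTree) (hn : 2 ≤ Fintype.card V) (v : V) (R : ℕ) (hR : 1 ≤ R) :
    (∃ w, ((Fintype.card V : ℝ) - 1) * R ≤ hh G w v) ∨
    (∃ U : Finset V, Fintype.card V ≤ 2 * R * 2 * #U ∧
      ∀ x ∈ U, ∀ y ∈ U, x ≠ y → ((Fintype.card V : ℝ) - 1) * G.dist x y / 2 ≤ hh G y x) := by
  obtain ⟨ρ, -, hρ⟩ := (univ : Finset V).exists_min_image (Sd G) ⟨v, mem_univ v⟩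
  replace hρ : ∀ x, Sd G ρ ≤ Sd G x := fun x => hρ x (mem_univ x)
  have hn1 : (0:ℝ) < (Fintype.card V : ℝ) - 1 := by
    have : (2:ℝ) ≤ Fintype.card V := by exact_mod_cast hn
    linarith
  have hlip : ∀ x, (Sd G x : ℝ) ≤ Sd G ρ + ((Fintype.card V : ℝ) - 1) * G.dist ρ x := by
    intro x
    have : ((Sd G x : ℕ) : ℝ) ≤ ((Sd G ρ + (Fintype.card V - 1) * G.dist ρ x : ℕ) : ℝ) := by
      exact_mod_cast Sd_lip G hT x ρ
    rw [Nat.cast_add, Nat.cast_mul, Nat.cast_sub (by omega)] at this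
    simpa using this
  let U := univ.filter fun z => G.dist v z = G.dist ρ v + G.dist ρ z
  have hU : Fintype.card V ≤ 2 * #U := by
    by_cases hv : ρ = v
    · have : U = univ := by ext z; simp [U, hv]
      rw [this, card_univ]; omega
    · obtain ⟨c, ha, he⟩ := tree_exists G hT hv
      have h1 := hρ c
      have h2 : (0:ℤ) ≤ ∑ z, ((G.dist c z : ℤ) - G.dist ρ z) := by
        rw [sum_sub_distrib]; unfold Sd at h1; zify at h1; linarith
      have h3 : ∑ z, ((G.dist c z : ℤ) - G.dist ρ z) ≤ ∑ z, (if z ∈ U then (2:ℤ) else 0) - ∑ z : V, 1 := by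
        rw [← sum_sub_distrib]
        refine sum_le_sum fun z _ => ?_
        rcases tree_adj G hT z ha with h | h
        · split_ifs <;> omega
        · have : z ∈ U := by
            simp only [U, mem_filter, mem_univ, true_and]
            exact branch G hT z v _ ρ c ha h he rfl
          rw [if_pos this]; omega
      rw [sum_ite_mem, univ_inter, sum_const, sum_const, card_univ, nsmul_eq_mul, nsmul_eq_mul, mul_one] at h3
      have : (0:ℤ) ≤ #U * 2 - Fintype.card V := by linarith
      omega
  by_cases hcase : ∃ w ∈ U, R ≤ G.dist ρ w
  · left
    obtain ⟨w, hw, hRw⟩ := hcase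
    refine ⟨w, ?_⟩
    simp only [U, mem_filter, mem_univ, true_and] at hw
    unfold hh
    rw [hw]; push_cast
    have h1 := hlip v
    have h2 : (Sd G ρ : ℝ) ≤ Sd G w := by exact_mod_cast hρ w
    have h3 : (R:ℝ) ≤ G.dist ρ w := by exact_mod_cast hRw
    have h4 := mul_le_mul_of_nonneg_left h3 hn1.le
    linarith
  · right
    push Not at hcase
    let cl : V → ℕ := fun x => ⌊2 * ((Sd G x : ℝ) - Sd G ρ) / ((Fintype.card V : ℝ) - 1)⌋₊
    have hnn : ∀ x, 0 ≤ 2 * ((Sd G x : ℝ) - Sd G ρ) / ((Fintype.card V : ℝ) - 1) := by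
      intro x
      have h2 : (Sd G ρ : ℝ) ≤ Sd G x := by exact_mod_cast hρ x
      apply div_nonneg _ hn1.le; linarith
    have hmap : ∀ x ∈ U, cl x ∈ range (2 * R) := by
      intro x hx
      rw [mem_range]
      rw [Nat.floor_lt (hnn x), div_lt_iff₀ hn1]
      have h1 := hlip x
      have h3 : (G.dist ρ x : ℝ) < R := by exact_mod_cast hcase x hx
      have := mul_lt_mul_of_pos_left h3 hn1
      push_cast
      linarith
    obtain ⟨i, -, hi⟩ : ∃ i ∈ range (2 * R), #U ≤ 2 * R * #(U.filter fun x => cl x = i) := by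
      by_contra! hcon
      have h1 := card_eq_sum_card_fiberwise hmap
      have h2 : ∑ i ∈ range (2 * R), 2 * R * #(U.filter fun x => cl x = i) < ∑ i ∈ range (2 * R), #U :=
        sum_lt_sum_of_nonempty (by simp; omega) hcon
      rw [← mul_sum, sum_const, card_range, smul_eq_mul] at h2
      rw [h1] at h2
      exact lt_irrefl _ h2
    refine ⟨U.filter fun x => cl x = i, by nlinarith, ?_⟩
    intro x hx y hy hxy
    rw [mem_filter] at hx hy
    have hd : (1:ℝ) ≤ G.dist x y := by exact_mod_cast hT.connected.pos_dist_of_ne hxy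
    have a1 := Nat.lt_floor_add_one (2 * ((Sd G x : ℝ) - Sd G ρ) / ((Fintype.card V : ℝ) - 1))
    have a2 := Nat.floor_le (hnn y)
    have e1 : (⌊2 * ((Sd G x : ℝ) - Sd G ρ) / ((Fintype.card V : ℝ) - 1)⌋₊ : ℝ) = i := congrArg Nat.cast hx.2
    have e2 : (⌊2 * ((Sd G y : ℝ) - Sd G ρ) / ((Fintype.card V : ℝ) - 1)⌋₊ : ℝ) = i := congrArg Nat.cast hy.2
    rw [e1, div_lt_iff₀ hn1] at a1
    rw [e2, le_div_iff₀ hn1] at a2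
    have := mul_le_mul_of_nonneg_left hd hn1.le
    unfold hh
    linarith
end tree

section final
variable {V : Type} [Fintype V] [DecidableEq V] (G : SimpleGraph V) [DecidableRel G.Adj]

lemma final_bound (M : ℕ) (hT : G.IsTree) (hn : 2 ≤ Fintype.card V) (hM : ∀ v : V, G.degree v ≤ M)
    (v : V) (E : ℝ) (hE : ∀ k, fs G k Finset.univ v ≤ E) :
    Real.exp (-13) / 1000 * (Fintype.card V : ℝ) * Real.log (Fintype.card V) ^ 2
                / Real.log ((M : ℝ) + 2) ≤ E := by
  set n : ℝ := (Fintype.card V : ℝ) with hndef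
  have hn2 : (2:ℝ) ≤ n := by rw [hndef]; exact_mod_cast hn
  have hn0 : 0 < n := by linarith
  set L := Real.log n with hL
  have hL0 : 0 ≤ L := Real.log_nonneg (by linarith)
  set g := Real.log ((M : ℝ) + 2) with hg
  have hg2 : 1 / 2 ≤ g := by
    have h1 : Real.log 2 ≤ g := Real.log_le_log (by norm_num) (by have : (0:ℝ) ≤ M := by positivity
                                                                  linarith)
    have := Real.log_two_gt_d9
    linarith
  have hg0 : 0 < g := by linarith
  have hexpL : Real.exp L = n := Real.exp_log hn0
  have he13 : Real.exp (-13) ≤ 1 := by rw [Real.exp_le_one_iff]; norm_num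
  have hepos := Real.exp_pos (-13)
  rw [div_le_iff₀ hg0]
  by_cases hsmall : L ≤ 13
  · have h1 : 1 ≤ E := by
      have := hE 1
      have hne : (univ : Finset V).erase v ≠ ∅ := by
        intro h
        have h2 := card_erase_of_mem (mem_univ v)
        rw [h, card_univ] at h2; simp at h2; omega
      simpa [fs, qs, hne] using this
    have h2 : Real.exp (-13) * n ≤ 1 := by
      rw [← hexpL, ← Real.exp_add, Real.exp_le_one_iff]; linarith
    have h3 : L ^ 2 ≤ 169 := by nlinarith
    have h4 : Real.exp (-13) * n * L ^ 2 ≤ 1 * 169 :=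
      mul_le_mul h2 h3 (by positivity) (by norm_num)
    have h5 : 1 * (1/2) ≤ E * g := mul_le_mul h1 hg2 (by norm_num) (by linarith)
    linarith
  push Not at hsmall
  set t := Real.exp (L / 4) with ht
  have ht1 : 1 ≤ t := by rw [ht]; apply Real.one_le_exp; linarith
  have htn : t ^ 4 = n := by
    rw [ht, ← Real.exp_nat_mul, ← hexpL]; congr 1; push_cast; ring
  have hLt : L ^ 2 ≤ 64 * t := by
    have h1 := Real.add_one_le_exp (L / 8)
    have h2 : t = Real.exp (L / 8) ^ 2 := by
      rw [ht, ← Real.exp_nat_mul]; congr 1; push_cast; ring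
    have h3 : L ≤ 8 * Real.exp (L / 8) := by linarith
    rw [h2]; nlinarith
  have hR1 : 1 ≤ ⌈t⌉₊ := Nat.one_le_ceil_iff.2 (by linarith)
  rcases centroid G hT hn v ⌈t⌉₊ hR1 with ⟨w, hw⟩ | ⟨U, hU, hUh⟩
  · rw [← hndef] at hw
    have htR := Nat.le_ceil t
    have h1 : n / 2 * t ≤ hh G w v := by
      refine le_trans ?_ hw
      exact mul_le_mul (by linarith) htR (by linarith) (by linarith)
    obtain ⟨k, hk⟩ := hit_tree G hT hn w v (n / 2 * t) (by positivity) h1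
    have h2 : n / 2 * t / 2 ≤ E := hk.trans ((fs_mono G k (subset_univ _) v).trans (hE k))
    have h3 : Real.exp (-13) / 1000 * n * L ^ 2 ≤ 1 / 1000 * n * (64 * t) := by gcongr
    have h4 : n / 2 * t / 2 * (1 / 2) ≤ E * g := mul_le_mul h2 hg2 (by norm_num) (le_trans (by positivity) h2)
    have h5 : 0 ≤ n * t := by positivity
    linarith
  · set k := ⌊L / (4 * g)⌋₊ with hk
    obtain ⟨A, hAU, hsep, hcard⟩ := separated G hT M hM k U
    have hkle : (k : ℝ) ≤ L / (4 * g) := Nat.floor_le (by positivity)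
    have hklt : L / (4 * g) < k + 1 := Nat.lt_floor_add_one _
    have hpow : (((M + 1) ^ k : ℕ) : ℝ) ≤ t := by
      have hM2 : (M:ℝ) + 2 = Real.exp g := (Real.exp_log (by positivity)).symm
      push_cast
      calc ((M:ℝ) + 1) ^ k ≤ ((M:ℝ) + 2) ^ k := by gcongr; norm_num
        _ = Real.exp (k * g) := by rw [hM2, ← Real.exp_nat_mul]
        _ ≤ t := by
          rw [ht]; apply Real.exp_le_exp.2
          rw [le_div_iff₀ (by positivity)] at hkle; linarith
    have hRle : ((⌈t⌉₊ : ℕ) : ℝ) ≤ 2 * t := by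
      have := (Nat.ceil_lt_add_one (by linarith : 0 ≤ t)).le
      linarith
    have ha : t ^ 2 / 8 ≤ #A := by
      have h1 : n ≤ 2 * (⌈t⌉₊ : ℝ) * 2 * (#U : ℝ) := by rw [hndef]; exact_mod_cast hU
      have h2 : (#U : ℝ) ≤ #A * (((M + 1) ^ k : ℕ) : ℝ) := by exact_mod_cast hcard
      have h3 : (#U : ℝ) ≤ #A * t := h2.trans (by gcongr)
      have h4 : n ≤ 2 * (2 * t) * 2 * (#A * t) := h1.trans (by gcongr)
      rw [← htn] at h4
      have h5 : 0 < t ^ 2 := by positivity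
      have h6 : t ^ 2 * (t ^ 2 / 8) ≤ t ^ 2 * #A := by nlinarith
      exact le_of_mul_le_mul_left h6 h5
    have hApos : 0 < #A := by
      have : (0:ℝ) < #A := lt_of_lt_of_le (by positivity) ha
      exact_mod_cast this
    have hharm : L / 4 ≤ ((harmonic #A : ℚ) : ℝ) - 1 := by
      have h1 := log_add_one_le_harmonic #A
      have h2 : Real.log (t ^ 2 / 8) ≤ Real.log ((#A + 1 : ℕ) : ℝ) :=
        Real.log_le_log (by positivity) (by push_cast; linarith)
      have h3 : Real.log (t ^ 2 / 8) = L / 2 - 3 * Real.log 2 := by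
        rw [Real.log_div (by positivity) (by norm_num), Real.log_pow, ht, Real.log_exp,
          show (8:ℝ) = 2 ^ 3 by norm_num, Real.log_pow]
        push_cast; ring
      have := Real.log_two_lt_d9
      linarith
    set B := (n - 1) * (k + 1) / 2 with hB
    have hB0 : 0 < B := by
      have : 0 < n - 1 := by linarith
      positivity
    have hpair : ∀ y z : V, ∃ m, y ∈ A → z ∈ A → y ≠ z → B / 2 ≤ fs G m {z} y := by
      intro y z
      by_cases h : y ∈ A ∧ z ∈ A ∧ y ≠ z
      · obtain ⟨hy, hz, hyz⟩ := h
        have h1 := hUh y (hAU hy) z (hAU hz) hyz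
        have h2 : ((k : ℝ) + 1) ≤ G.dist y z := by exact_mod_cast hsep y hy z hz hyz
        have h3 : B ≤ hh G z y := by
          refine le_trans ?_ h1
          rw [hB, ← hndef]
          have := mul_le_mul_of_nonneg_left h2 (by linarith : 0 ≤ n - 1)
          linarith
        obtain ⟨m, hm⟩ := hit_tree G hT hn z y B hB0 h3
        exact ⟨m, fun _ _ _ => hm⟩
      · exact ⟨0, fun h1 h2 h3 => absurd ⟨h1, h2, h3⟩ h⟩
    choose m hm using hpair
    let m0 := ∑ y, ∑ z, m y z
    have hm0 : ∀ y z, m y z ≤ m0 := fun y z =>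
      (single_le_sum (f := fun z => m y z) (fun _ _ => Nat.zero_le _) (mem_univ z)).trans
        (single_le_sum (f := fun y => ∑ z, m y z) (fun _ _ => Nat.zero_le _) (mem_univ y))
    have hmat := matthews G (tree_deg G hT hn) A (B / 2) m0
      (fun y hy z hz hyz => (hm y z hy hz hyz).trans (fs_mono_left G (hm0 y z) _ _)) v E hE
      (#A - 1) A Subset.rfl (by omega)
    rw [Nat.sub_add_cancel hApos] at hmat
    have hsup : ⨆ k, fs G k A v ≤ E := ciSup_le fun k => (fs_mono G k (subset_univ A) v).trans (hE k)
    have h1 : B / 2 * (L / 4) ≤ E :=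
      le_trans (mul_le_mul_of_nonneg_left hharm (by linarith)) (hmat.trans hsup)
    have h2 : n / 2 * (L / (4 * g)) / 2 ≤ B := by
      rw [hB]
      have : n / 2 * (L / (4 * g)) ≤ (n - 1) * (k + 1) :=
        mul_le_mul (by linarith) hklt.le (by positivity) (by linarith)
      linarith
    have h3 : n / 2 * (L / (4 * g)) / 2 / 2 * (L / 4) ≤ E := by
      refine le_trans ?_ h1
      gcongr
    have h4 : n / 2 * (L / (4 * g)) / 2 / 2 * (L / 4) * g = n * L ^ 2 / 128 := by
      field_simp; ring
    have h5 := mul_le_mul_of_nonneg_right h3 hg0.le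
    rw [h4] at h5
    have h6 : Real.exp (-13) / 1000 * n * L ^ 2 ≤ 1 / 1000 * n * L ^ 2 := by gcongr
    have h7 : 0 ≤ n * L ^ 2 := by positivity
    linarith
end final

/-- There is an absolute constant `c' > 0` such that for every finite
tree with `n ≥ 2` vertices and maximal degree at most `M`, and every start vertex `v`,
the expected cover time from `v` is at least `c' · n · (log n)² / log (M+2)`. -/
theorem cover_time_lower_bound_tree :
    ∃ c' : ℝ, 0 < c' ∧
      ∀ (V : Type) (_ : Fintype V) (_ : DecidableEq V) (G : SimpleGraph V)
        (_ : DecidableRel G.Adj) (M : ℕ),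
        G.IsTree → 2 ≤ Fintype.card V → (∀ v : V, G.degree v ≤ M) →
        ∀ v : V,
          ENNReal.ofReal
              (c' * (Fintype.card V : ℝ) * Real.log (Fintype.card V) ^ 2
                / Real.log ((M : ℝ) + 2))
            ≤ expCover G v := by
  refine ⟨Real.exp (-13) / 1000, by positivity, ?_⟩
  intro V _ _ G _ M hT hn hM v
  by_cases h : expCover G v = ⊤
  · rw [h]; exact le_top
  · exact (ENNReal.ofReal_le_iff_le_toReal h).2
      (final_bound G M hT hn hM v _ (expCover_bdd G v h))
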